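/- Let d ≥ 3 be an integer, ε ≠ 0 and τ ∈ ℝ, and let V : ℝ^d → ℝ be a continuous real-valued function. If u is a classical solution of −Δu + V u ± iεu − τu = f on ℝ^d with u, ∇u ∈ L²(ℝ^d) and f ∈ L²(ℝ^d), then |ε|·‖u‖²_X ≤ ‖f‖²_{X*} + sup_{R>0} R^{−3}∫_{B(0,R)} |u(x)|² dx + ‖∇u‖²_X. -/

import Mathlib

/-!
Write `U = ‖u‖²_X`, `N = ‖f‖_{X*}`, `M = ∫ |u|²` and `A = sup_R R⁻³ ∫_{B(0,R)} |u|²`. The proof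
gives the stronger bound `|ε| U ≤ max (A, N²)`.

* Testing the equation against `ū` and taking imaginary parts yields `|ε| M ≤ ∫ |f| |u|`
  (`energy_lintegral`). A cutoff is needed since `Δu` is not known to be square integrable; its
  error vanishes in the limit because `u` and `∇u` are in `L²`.
* Cauchy–Schwarz on dyadic shells bounds `∫ |f| |u|` by `N √U` (`lintegral_mul_le_duality`).
* Splitting the radii at `|ε| R² = 1` gives `U ≤ max (A / |ε|, √|ε| M)` (`nX2_le_max`).

If the first term of the maximum dominates, then `|ε| U ≤ A`. Otherwise `U` is finite and
`|ε| U² ≤ (|ε| M)² ≤ N² U`, hence `|ε| U ≤ N²`.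
-/

noncomputable section
open MeasureTheory Metric Set ENNReal

abbrev Ed (d : ℕ) := EuclideanSpace ℝ (Fin d)

/-- partial derivative of a complex valued function -/
def pd {d : ℕ} (u : Ed d → ℂ) (i : Fin d) (x : Ed d) : ℂ :=
  fderiv ℝ u x (EuclideanSpace.single i 1)

/-- Laplacian of a complex valued function -/
def lap {d : ℕ} (u : Ed d → ℂ) (x : Ed d) : ℂ :=
  ∑ i, fderiv ℝ (pd u i) x (EuclideanSpace.single i 1)

/-- squared norm of the gradient, as an extended nonnegative real -/
def gradSq {d : ℕ} (u : Ed d → ℂ) (x : Ed d) : ℝ≥0∞ :=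
  ∑ i, (‖pd u i x‖₊ : ℝ≥0∞) ^ 2

/-- |u(x)|² as an extended nonnegative real -/
def usq {d : ℕ} (u : Ed d → ℂ) (x : Ed d) : ℝ≥0∞ := (‖u x‖₊ : ℝ≥0∞) ^ 2

/-- radial derivative ∂_r V (x) = (x/|x|)·∇V(x) -/
def radialDeriv {d : ℕ} (V : Ed d → ℝ) (x : Ed d) : ℝ :=
  fderiv ℝ V x x / ‖x‖

/-- Morrey–Campanato type quantity sup_{R>0} (1/R) ∫_{B(0,R)} g -/
def nX2 {d : ℕ} (g : Ed d → ℝ≥0∞) : ℝ≥0∞ :=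
  ⨆ (R : ℝ) (_ : 0 < R), (ENNReal.ofReal R)⁻¹ * ∫⁻ x in ball (0 : Ed d) R, g x

/-- dyadic shell C_j -/
def shell (d : ℕ) (j : ℤ) : Set (Ed d) := {x | (2:ℝ)^j < ‖x‖ ∧ ‖x‖ ≤ (2:ℝ)^(j+1)}

/-- the dual norm ‖f‖_{X*} applied to g = |f|² -/
def nXstar {d : ℕ} (g : Ed d → ℝ≥0∞) : ℝ≥0∞ :=
  ∑' j : ℤ, (ENNReal.ofReal ((2:ℝ)^(j+1)) * ∫⁻ x in shell d j, g x) ^ (1/2 : ℝ)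

/-- the index j₀ with 2^{j₀} < ρ ≤ 2^{j₀+1} -/
def jIdx (ρ : ℝ) : ℤ := ⌈Real.logb 2 ρ⌉ - 1

/-- sup_{R ≥ ρ} (1/R)∫_{B(0,R)} g -/
def nX2r {d : ℕ} (ρ : ℝ) (g : Ed d → ℝ≥0∞) : ℝ≥0∞ :=
  ⨆ (R : ℝ) (_ : ρ ≤ R), (ENNReal.ofReal R)⁻¹ * ∫⁻ x in ball (0 : Ed d) R, g x

/-- the dual norm ‖f‖_{X*_ρ} applied to g = |f|² -/
def nXstarr {d : ℕ} (ρ : ℝ) (g : Ed d → ℝ≥0∞) : ℝ≥0∞ :=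
  (∑' j : {j : ℤ // jIdx ρ ≤ j},
    (ENNReal.ofReal ((2:ℝ)^((j:ℤ)+1)) * ∫⁻ x in shell d (j:ℤ), g x) ^ (1/2 : ℝ))
  + (ENNReal.ofReal ρ * ∫⁻ x in ball (0 : Ed d) ρ, g x) ^ (1/2 : ℝ)

/-- integral of g over the sphere of radius R w.r.t. (d-1)-dimensional Hausdorff measure -/
def sphInt {d : ℕ} (R : ℝ) (g : Ed d → ℝ≥0∞) : ℝ≥0∞ :=
  ∫⁻ x in Metric.sphere (0 : Ed d) R, g x ∂(μH[(d:ℝ) - 1])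

/-! ### The energy inequality -/

/-- The `i`-th component of the current `Im (ū ∇u)`. -/
def flux {d : ℕ} (u : Ed d → ℂ) (i : Fin d) (x : Ed d) : ℝ :=
  (starRingEnd ℂ (u x) * pd u i x).im

lemma contDiff_pd {d : ℕ} {u : Ed d → ℂ} (hu : ContDiff ℝ 2 u) (i : Fin d) :
    ContDiff ℝ 1 (pd u i) :=
  (hu.fderiv_right (m := 1) (by norm_num)).clm_apply contDiff_const

lemma contDiff_flux {d : ℕ} {u : Ed d → ℂ} (hu : ContDiff ℝ 2 u) (i : Fin d) :
    ContDiff ℝ 1 (flux u i) :=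
  Complex.imCLM.contDiff.comp
    ((Complex.conjCLE.contDiff.comp (hu.of_le (by norm_num))).mul (contDiff_pd hu i))

/-- The diagonal derivatives of the current contain no first-order terms, because
`|∂ᵢu|²` is real; summed over `i` they give `Im (ū Δu)`. -/
lemma fderiv_flux {d : ℕ} {u : Ed d → ℂ} (hu : ContDiff ℝ 2 u) (i : Fin d) (x : Ed d) :
    fderiv ℝ (flux u i) x (EuclideanSpace.single i 1)
      = (starRingEnd ℂ (u x) * fderiv ℝ (pd u i) x (EuclideanSpace.single i 1)).im := by
  have h1 : HasFDerivAt u (fderiv ℝ u x) x :=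
    (hu.differentiable (by norm_num) x).hasFDerivAt
  have h2 : HasFDerivAt (pd u i) (fderiv ℝ (pd u i) x) x :=
    ((contDiff_pd hu i).differentiable (by norm_num) x).hasFDerivAt
  have h3 := (Complex.conjCLE.toContinuousLinearMap.hasFDerivAt (x := u x)).comp x h1
  have h4 := (Complex.imCLM.hasFDerivAt).comp x (h3.mul h2)
  have h5 : fderiv ℝ (flux u i) x = _ := h4.fderiv
  rw [h5]
  simp [pd]
  ring

lemma continuous_lap {d : ℕ} {u : Ed d → ℂ} (hu : ContDiff ℝ 2 u) : Continuous (lap u) := by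
  unfold lap
  exact continuous_finsetSum _ fun i _ =>
    (((contDiff_pd hu i).continuous_fderiv (by norm_num)).clm_apply continuous_const)

lemma continuous_rhs {d : ℕ} {ε τ σ : ℝ} {V : Ed d → ℝ} (hVcont : Continuous V)
    {u f : Ed d → ℂ} (hu : ContDiff ℝ 2 u)
    (heq : ∀ x, -lap u x + (V x : ℂ) * u x + (σ : ℂ) * ((ε : ℂ) * Complex.I) * u x
      - (τ : ℂ) * u x = f x) : Continuous f := by
  rw [← funext heq]
  have := continuous_lap hu
  have := Complex.continuous_ofReal.comp hVcont
  have := hu.continuous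
  fun_prop

/-- The identity `∫ φ Im(ū Δu) = -∫ ∇φ · Im(ū ∇u)` for a compactly supported cutoff `φ`. -/
lemma integral_cutoff_lap {d : ℕ} {u : Ed d → ℂ} (hu : ContDiff ℝ 2 u) {φ : Ed d → ℝ}
    (hφ : ContDiff ℝ 1 φ) (hc : HasCompactSupport φ) :
    ∫ x, φ x * (starRingEnd ℂ (u x) * lap u x).im
      = - ∑ i, ∫ x, fderiv ℝ φ x (EuclideanSpace.single i 1) * flux u i x := by
  have hφ' : ∀ i : Fin d, Continuous fun x => fderiv ℝ φ x (EuclideanSpace.single i 1) :=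
    fun i => (hφ.continuous_fderiv (by norm_num)).clm_apply continuous_const
  have hF' : ∀ i : Fin d, Continuous fun x =>
      fderiv ℝ (flux u i) x (EuclideanSpace.single i 1) :=
    fun i => ((contDiff_flux hu i).continuous_fderiv (by norm_num)).clm_apply continuous_const
  have hcd : ∀ i : Fin d, HasCompactSupport fun x => fderiv ℝ φ x (EuclideanSpace.single i 1) :=
    fun i => hc.fderiv_apply (𝕜 := ℝ) _
  have hint : ∀ i : Fin d, Integrable fun x =>
      φ x * fderiv ℝ (flux u i) x (EuclideanSpace.single i 1) := fun i =>
    (hφ.continuous.mul (hF' i)).integrable_of_hasCompactSupport hc.mul_right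
  have key : ∀ i : Fin d, ∫ x, φ x * fderiv ℝ (flux u i) x (EuclideanSpace.single i 1)
      = - ∫ x, fderiv ℝ φ x (EuclideanSpace.single i 1) * flux u i x := fun i =>
    integral_mul_fderiv_eq_neg_fderiv_mul_of_integrable
      (((hφ' i).mul (contDiff_flux hu i).continuous).integrable_of_hasCompactSupport
        (hcd i).mul_right)
      (hint i)
      ((hφ.continuous.mul (contDiff_flux hu i).continuous).integrable_of_hasCompactSupport
        hc.mul_right)
      (fun x _ => hφ.differentiable (by norm_num) x)
      (fun x _ => (contDiff_flux hu i).differentiable (by norm_num) x)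
  rw [← Finset.sum_neg_distrib, ← Finset.sum_congr rfl fun i _ => key i,
    ← integral_finsetSum _ fun i _ => hint i]
  congr 1 with x
  simp_rw [fderiv_flux hu, lap, Finset.mul_sum, Complex.im_sum, Finset.mul_sum]

lemma integrable_sq_of_usq {d : ℕ} {g : Ed d → ℂ} (hg : Continuous g)
    (h : (∫⁻ x, usq g x) < ⊤) : Integrable fun x => ‖g x‖ ^ 2 := by
  refine ⟨(hg.norm.pow 2).aestronglyMeasurable, ?_⟩
  refine lt_of_le_of_lt (lintegral_mono fun x => ?_) h
  simp [usq, enorm_eq_nnnorm]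

lemma integrable_mul_norm {d : ℕ} {g h : Ed d → ℂ} (hg : Continuous g) (hh : Continuous h)
    (hg2 : Integrable fun x => ‖g x‖ ^ 2) (hh2 : Integrable fun x => ‖h x‖ ^ 2) :
    Integrable fun x => ‖g x‖ * ‖h x‖ := by
  refine (hg2.add hh2).mono' (hg.norm.mul hh.norm).aestronglyMeasurable (.of_forall fun x => ?_)
  simp only [Real.norm_eq_abs, Pi.add_apply]
  rw [abs_of_nonneg (by positivity)]
  nlinarith [sq_nonneg (‖g x‖ - ‖h x‖), sq_nonneg (‖g x‖), sq_nonneg (‖h x‖)]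

open Filter Topology in
/-- `|ε| ∫ |u|² ≤ ∫ |f| |u|`: the imaginary part of the equation tested against `χ(x/(n+1)) ū`.
The real potential drops out, and the term carrying `∇χ` is `O(1/n)` because `|u| |∇u|` is
integrable. -/
lemma energy {d : ℕ} {ε τ : ℝ} {V : Ed d → ℝ} (hVcont : Continuous V)
    {σ : ℝ} (hσ : σ = 1 ∨ σ = -1) {u f : Ed d → ℂ} (hu : ContDiff ℝ 2 u)
    (huL2 : (∫⁻ x, usq u x) < ⊤) (hgradL2 : (∫⁻ x, gradSq u x) < ⊤)
    (hfL2 : (∫⁻ x, usq f x) < ⊤)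
    (heq : ∀ x, -lap u x + (V x : ℂ) * u x + (σ : ℂ) * ((ε : ℂ) * Complex.I) * u x
      - (τ : ℂ) * u x = f x) :
    |ε| * ∫ x, ‖u x‖ ^ 2 ≤ ∫ x, ‖f x‖ * ‖u x‖ := by
  have huc := hu.continuous
  have hfc : Continuous f := continuous_rhs hVcont hu heq
  have hpc : ∀ i, Continuous (pd u i) := fun i => (contDiff_pd hu i).continuous
  have iu := integrable_sq_of_usq huc huL2
  have ifu := integrable_mul_norm hfc huc (integrable_sq_of_usq hfc hfL2) iu
  have ip : ∀ i, Integrable fun x => ‖u x‖ * ‖pd u i x‖ := fun i => by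
    refine integrable_mul_norm huc (hpc i) iu (integrable_sq_of_usq (hpc i) ?_)
    refine lt_of_le_of_lt (lintegral_mono fun x => ?_) hgradL2
    exact Finset.single_le_sum (f := fun i => (‖pd u i x‖₊ : ℝ≥0∞) ^ 2)
      (fun _ _ => zero_le) (Finset.mem_univ i)
  let χ : ContDiffBump (0 : Ed d) := ⟨1, 2, one_pos, one_lt_two⟩
  have hχ : ContDiff ℝ 1 χ := χ.contDiff
  obtain ⟨C, hC⟩ : ∃ C, ∀ x, ‖fderiv ℝ χ x‖ ≤ C :=
    (hχ.continuous_fderiv (by norm_num)).bounded_above_of_compact_support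
      (χ.hasCompactSupport.fderiv (𝕜 := ℝ))
  have hC0 : 0 ≤ C := (norm_nonneg _).trans (hC 0)
  let φ : ℕ → Ed d → ℝ := fun n x => χ (((n : ℝ) + 1)⁻¹ • x)
  have hn : ∀ n : ℕ, ((n : ℝ) + 1)⁻¹ ≠ 0 := fun n => by positivity
  have hφ : ∀ n, ContDiff ℝ 1 (φ n) := fun n => hχ.comp (contDiff_const_smul _)
  have hφc : ∀ n, HasCompactSupport (φ n) := fun n =>
    χ.hasCompactSupport.comp_smul (hn n)
  have hφ0 : ∀ n x, 0 ≤ φ n x := fun n x => χ.nonneg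
  have hφ1 : ∀ n x, φ n x ≤ 1 := fun n x => χ.le_one
  have hφd : ∀ n (i : Fin d) x,
      |fderiv ℝ (φ n) x (EuclideanSpace.single i 1)| ≤ C * ((n : ℝ) + 1)⁻¹ := fun n i x => by
    have h : fderiv ℝ (φ n) x = ((n : ℝ) + 1)⁻¹ • fderiv ℝ χ (((n : ℝ) + 1)⁻¹ • x) :=
      fderiv_comp_smul (f := (χ : Ed d → ℝ)) _
    rw [h, smul_apply, smul_eq_mul, abs_mul, mul_comm,
      abs_of_nonneg (by positivity : (0 : ℝ) ≤ ((n : ℝ) + 1)⁻¹)]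
    gcongr
    refine ((fderiv ℝ χ _).le_opNorm _).trans ?_
    simpa using hC _
  have hlim : Tendsto (fun n => ∫ x, φ n x * ‖u x‖ ^ 2) atTop (𝓝 (∫ x, ‖u x‖ ^ 2)) := by
    refine tendsto_integral_of_dominated_convergence (fun x => ‖u x‖ ^ 2)
      (fun n => ((hφ n).continuous.mul (huc.norm.pow 2)).aestronglyMeasurable) iu
      (fun n => .of_forall fun x => ?_) (.of_forall fun x => ?_)
    · rw [Real.norm_of_nonneg (mul_nonneg (hφ0 n x) (by positivity))]
      exact mul_le_of_le_one_left (by positivity) (hφ1 n x)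
    · have h1 : Tendsto (fun n => φ n x) atTop (𝓝 (χ ((0 : ℝ) • x))) :=
        (hχ.continuous.tendsto _).comp
          (((tendsto_one_div_add_atTop_nhds_zero_nat (𝕜 := ℝ)).congr
            fun n => by simp).smul_const x)
      have h2 : χ ((0 : ℝ) • x) = 1 := by
        rw [zero_smul]; exact χ.one_of_mem_closedBall (by simp [χ.rIn_pos.le])
      rw [h2] at h1
      simpa using h1.mul_const (‖u x‖ ^ 2)
  have hbd : ∀ n : ℕ, |ε| * ∫ x, φ n x * ‖u x‖ ^ 2 ≤
      (∫ x, ‖f x‖ * ‖u x‖) + (∑ i, C * ∫ x, ‖u x‖ * ‖pd u i x‖) * ((n : ℝ) + 1)⁻¹ := by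
    intro n
    -- The equation multiplied by `φ ū`: its imaginary part does not see `V` and `τ`.
    have hid : ∀ x, σ * ε * (φ n x * ‖u x‖ ^ 2) =
        φ n x * (starRingEnd ℂ (u x) * lap u x).im
          + φ n x * (starRingEnd ℂ (u x) * f x).im := fun x => by
      have : ‖u x‖ ^ 2 = (u x).re ^ 2 + (u x).im ^ 2 := by
        rw [← Complex.normSq_eq_norm_sq, Complex.normSq_apply]; ring
      rw [this, ← heq x]
      simp
      ring
    have hi1 : Integrable fun x => φ n x * (starRingEnd ℂ (u x) * lap u x).im := by
      have := continuous_lap hu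
      exact ((hφ n).continuous.mul (by fun_prop)).integrable_of_hasCompactSupport
        (hφc n).mul_right
    have hi2 : Integrable fun x => φ n x * (starRingEnd ℂ (u x) * f x).im :=
      ((hφ n).continuous.mul (by fun_prop)).integrable_of_hasCompactSupport
        (hφc n).mul_right
    have hmain : σ * ε * ∫ x, φ n x * ‖u x‖ ^ 2 =
        (- ∑ i, ∫ x, fderiv ℝ (φ n) x (EuclideanSpace.single i 1) * flux u i x)
          + ∫ x, φ n x * (starRingEnd ℂ (u x) * f x).im := by
      rw [← integral_cutoff_lap hu (hφ n) (hφc n), ← integral_add hi1 hi2,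
        ← integral_const_mul]
      exact integral_congr_ae (.of_forall hid)
    have hf : |∫ x, φ n x * (starRingEnd ℂ (u x) * f x).im| ≤ ∫ x, ‖f x‖ * ‖u x‖ := by
      rw [← Real.norm_eq_abs]
      refine norm_integral_le_of_norm_le ifu (.of_forall fun x => ?_)
      rw [Real.norm_eq_abs, abs_mul, abs_of_nonneg (hφ0 n x)]
      refine (mul_le_of_le_one_left (abs_nonneg _) (hφ1 n x)).trans
        ((Complex.abs_im_le_norm _).trans ?_)
      simp [mul_comm]
    have hg : ∀ i, |∫ x, fderiv ℝ (φ n) x (EuclideanSpace.single i 1) * flux u i x|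
        ≤ (C * ∫ x, ‖u x‖ * ‖pd u i x‖) * ((n : ℝ) + 1)⁻¹ := fun i => by
      have : (C * ∫ x, ‖u x‖ * ‖pd u i x‖) * ((n : ℝ) + 1)⁻¹
          = ∫ x, (C * ((n : ℝ) + 1)⁻¹) * (‖u x‖ * ‖pd u i x‖) := by
        rw [integral_const_mul]; ring
      rw [this]
      rw [← Real.norm_eq_abs]
      refine norm_integral_le_of_norm_le ((ip i).const_mul _) (.of_forall fun x => ?_)
      rw [Real.norm_eq_abs, abs_mul]
      refine mul_le_mul (hφd n i x) ?_ (abs_nonneg _) (by positivity)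
      refine (Complex.abs_im_le_norm _).trans ?_
      simp
    have hσ1 : |σ| = 1 := by rcases hσ with rfl | rfl <;> simp
    have hnn : 0 ≤ ∫ x, φ n x * ‖u x‖ ^ 2 :=
      integral_nonneg fun x => mul_nonneg (hφ0 n x) (by positivity)
    calc |ε| * ∫ x, φ n x * ‖u x‖ ^ 2 = |σ * ε * ∫ x, φ n x * ‖u x‖ ^ 2| := by
          rw [abs_mul, abs_mul, hσ1, one_mul, abs_of_nonneg hnn]
      _ ≤ _ := by
          rw [hmain, Finset.sum_mul, add_comm]
          refine (abs_add_le _ _).trans (add_le_add hf ?_)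
          rw [abs_neg]
          exact (Finset.abs_sum_le_sum_abs _ _).trans (Finset.sum_le_sum fun i _ => hg i)
  refine le_of_tendsto_of_tendsto' (hlim.const_mul |ε|) ?_ hbd
  have := ((tendsto_one_div_add_atTop_nhds_zero_nat (𝕜 := ℝ)).const_mul
    (∑ i, C * ∫ x, ‖u x‖ * ‖pd u i x‖)).const_add (∫ x, ‖f x‖ * ‖u x‖)
  simpa using this

lemma energy_lintegral {d : ℕ} {ε τ : ℝ} {V : Ed d → ℝ} (hVcont : Continuous V)
    {σ : ℝ} (hσ : σ = 1 ∨ σ = -1) {u f : Ed d → ℂ} (hu : ContDiff ℝ 2 u)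
    (huL2 : (∫⁻ x, usq u x) < ⊤) (hgradL2 : (∫⁻ x, gradSq u x) < ⊤)
    (hfL2 : (∫⁻ x, usq f x) < ⊤)
    (heq : ∀ x, -lap u x + (V x : ℂ) * u x + (σ : ℂ) * ((ε : ℂ) * Complex.I) * u x
      - (τ : ℂ) * u x = f x) :
    ENNReal.ofReal |ε| * ∫⁻ x, usq u x ≤ ∫⁻ x, ‖f x‖ₑ * ‖u x‖ₑ := by
  have hfc : Continuous f := continuous_rhs hVcont hu heq
  have iu := integrable_sq_of_usq hu.continuous huL2
  have ifu := integrable_mul_norm hfc hu.continuous (integrable_sq_of_usq hfc hfL2) iu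
  have h := ENNReal.ofReal_le_ofReal (energy hVcont hσ hu huL2 hgradL2 hfL2 heq)
  rw [ENNReal.ofReal_mul (abs_nonneg _),
    ofReal_integral_eq_lintegral_ofReal iu (.of_forall fun x => by positivity),
    ofReal_integral_eq_lintegral_ofReal ifu (.of_forall fun x => by positivity)] at h
  have e1 : ∀ x, ENNReal.ofReal (‖u x‖ ^ 2) = usq u x := fun x => by
    rw [ENNReal.ofReal_pow (norm_nonneg _), ofReal_norm, usq, enorm_eq_nnnorm]
  have e2 : ∀ x, ENNReal.ofReal (‖f x‖ * ‖u x‖) = ‖f x‖ₑ * ‖u x‖ₑ := fun x => by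
    rw [ENNReal.ofReal_mul (norm_nonneg _), ofReal_norm, ofReal_norm]
  simpa only [e1, e2] using h

/-! ### Duality between the two norms -/

lemma measurableSet_shell (d : ℕ) (j : ℤ) : MeasurableSet (shell d j) :=
  (isOpen_lt continuous_const continuous_norm).measurableSet.inter
    (isClosed_le continuous_norm continuous_const).measurableSet

lemma iUnion_shell (d : ℕ) : ⋃ j : ℤ, shell d j = {(0 : Ed d)}ᶜ := by
  ext x
  simp only [mem_iUnion, mem_compl_iff, mem_singleton_iff]
  constructor
  · rintro ⟨j, hj, -⟩ rfl
    rw [norm_zero] at hj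
    exact absurd hj (not_lt.2 (by positivity))
  · intro hx
    obtain ⟨n, h1, h2⟩ := exists_mem_Ioc_zpow (norm_pos_iff.2 hx) (one_lt_two (α := ℝ))
    exact ⟨n, h1, h2⟩

lemma lintegral_shell_le {d : ℕ} [Nontrivial (Ed d)] (g : Ed d → ℝ≥0∞) (j : ℤ) :
    ∫⁻ x in shell d j, g x ≤ ENNReal.ofReal ((2 : ℝ) ^ (j + 1)) * nX2 g := by
  have h2 : (0 : ℝ) < 2 ^ (j + 1) := by positivity
  have hball : ∫⁻ x in shell d j, g x ≤ ∫⁻ x in ball (0 : Ed d) (2 ^ (j + 1)), g x := by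
    have hsub : shell d j ⊆ closedBall (0 : Ed d) (2 ^ (j + 1)) := fun x hx => by
      simpa using hx.2
    have hae : (closedBall (0 : Ed d) (2 ^ (j + 1)) : Set (Ed d)) =ᵐ[volume]
        ball (0 : Ed d) (2 ^ (j + 1)) := by
      rw [← ball_union_sphere]
      exact union_ae_eq_left_of_ae_eq_empty
        (ae_eq_empty.2 (Measure.addHaar_sphere volume _ _))
    exact (lintegral_mono_set hsub).trans_eq (setLIntegral_congr hae)
  refine hball.trans ?_
  have h := le_iSup₂ (f := fun (R : ℝ) (_ : 0 < R) =>
    (ENNReal.ofReal R)⁻¹ * ∫⁻ x in ball (0 : Ed d) R, g x) _ h2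
  rw [mul_comm]
  refine (ENNReal.div_le_iff (by simpa using h2) ENNReal.ofReal_ne_top).1 ?_
  rw [ENNReal.div_eq_inv_mul]
  exact h

/-- The duality bound `∫ |f| |u| ≤ ‖f‖_{X*} ‖u‖_X`: Cauchy–Schwarz on each dyadic shell. -/
lemma lintegral_mul_le_duality {d : ℕ} [Nontrivial (Ed d)] {u f : Ed d → ℂ}
    (hu : Measurable u) (hf : Measurable f) :
    ∫⁻ x, ‖f x‖ₑ * ‖u x‖ₑ ≤ nXstar (usq f) * (nX2 (usq u)) ^ (1 / 2 : ℝ) := by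
  have hcover : ∫⁻ x, ‖f x‖ₑ * ‖u x‖ₑ ≤ ∑' j : ℤ, ∫⁻ x in shell d j, ‖f x‖ₑ * ‖u x‖ₑ := by
    refine le_trans (le_of_eq ?_) (lintegral_iUnion_le (shell d) _)
    rw [iUnion_shell, restrict_compl_singleton]
  refine hcover.trans ?_
  rw [nXstar, ← ENNReal.tsum_mul_right]
  refine ENNReal.tsum_le_tsum fun j => ?_
  have hcs := ENNReal.lintegral_mul_le_Lp_mul_Lq (volume.restrict (shell d j))
    (Real.holderConjugate_iff.2 ⟨one_lt_two, by norm_num⟩ : (2 : ℝ).HolderConjugate 2)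
    hf.enorm.aemeasurable hu.enorm.aemeasurable
  have e : ∀ g : Ed d → ℂ, ∀ x, ‖g x‖ₑ ^ (2 : ℝ) = usq g x := fun g x => by
    simp [usq, enorm_eq_nnnorm]
  simp only [e] at hcs
  refine hcs.trans ?_
  calc (∫⁻ x in shell d j, usq f x) ^ (1 / 2 : ℝ) * (∫⁻ x in shell d j, usq u x) ^ (1 / 2 : ℝ)
      ≤ (∫⁻ x in shell d j, usq f x) ^ (1 / 2 : ℝ) *
        (ENNReal.ofReal ((2 : ℝ) ^ (j + 1)) * nX2 (usq u)) ^ (1 / 2 : ℝ) := by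
        gcongr; exact lintegral_shell_le _ j
    _ = _ := by
        rw [ENNReal.mul_rpow_of_nonneg _ _ (by norm_num),
          ENNReal.mul_rpow_of_nonneg _ _ (by norm_num)]
        ring

/-! ### Comparison at the scale `|ε| R² = 1` -/

/-- Radii with `|ε| R² ≤ 1` satisfy `R⁻¹ ≤ |ε|⁻¹ R⁻³` and are controlled by the `R⁻³` supremum;
larger radii satisfy `R⁻¹ ≤ √|ε|` and are controlled by the total mass. -/
lemma nX2_le_max {d : ℕ} {ε : ℝ} (hε : ε ≠ 0) (g : Ed d → ℝ≥0∞) :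
    nX2 g ≤ max
      ((ENNReal.ofReal |ε|)⁻¹ * ⨆ (R : ℝ) (_ : 0 < R),
        (ENNReal.ofReal (R ^ 3))⁻¹ * ∫⁻ x in ball (0 : Ed d) R, g x)
      (ENNReal.ofReal √|ε| * ∫⁻ x, g x) := by
  have hε' : 0 < |ε| := abs_pos.2 hε
  refine iSup₂_le fun R hR => ?_
  rcases le_total (|ε| * R ^ 2) 1 with h | h
  · refine le_max_of_le_left ?_
    refine le_trans ?_ (mul_le_mul_right (le_iSup₂ (f := fun (R : ℝ) (_ : 0 < R) =>
      (ENNReal.ofReal (R ^ 3))⁻¹ * ∫⁻ x in ball (0 : Ed d) R, g x) R hR) _)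
    rw [← mul_assoc]
    gcongr
    rw [← ENNReal.ofReal_inv_of_pos hR, ← ENNReal.ofReal_inv_of_pos hε',
      ← ENNReal.ofReal_inv_of_pos (by positivity), ← ENNReal.ofReal_mul (by positivity)]
    refine ENNReal.ofReal_le_ofReal ?_
    rw [← mul_inv]
    refine inv_anti₀ (by positivity) ?_
    nlinarith
  · refine le_max_of_le_right ?_
    refine mul_le_mul' ?_ (setLIntegral_le_lintegral _ _)
    rw [← ENNReal.ofReal_inv_of_pos hR]
    refine ENNReal.ofReal_le_ofReal (Real.le_sqrt_of_sq_le ?_)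
    rw [inv_pow]
    exact inv_le_of_inv_le₀ (by positivity) ((inv_le_iff_one_le_mul₀' hε').2 h)

/-- for classical solutions of `-Δu + Vu ± iεu - τu = f` with
`u, ∇u ∈ L²` and `f ∈ L²`, one has
`|ε|·‖u‖²_X ≤ ‖f‖²_{X*} + sup_{R>0} R⁻³∫_{B(0,R)}|u|² + ‖∇u‖²_X`. -/
theorem stmt_3 (d : ℕ) (hd : 3 ≤ d) (ε τ : ℝ) (hε : ε ≠ 0)
    (V : Ed d → ℝ) (hVcont : Continuous V)
    (σ : ℝ) (hσ : σ = 1 ∨ σ = -1)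
    (u f : Ed d → ℂ) (hu : ContDiff ℝ 2 u)
    (huL2 : (∫⁻ x, usq u x) < ⊤) (hgradL2 : (∫⁻ x, gradSq u x) < ⊤)
    (hfL2 : (∫⁻ x, usq f x) < ⊤)
    (heq : ∀ x, -lap u x + (V x : ℂ) * u x + (σ : ℂ) * ((ε : ℂ) * Complex.I) * u x
      - (τ : ℂ) * u x = f x) :
    ENNReal.ofReal |ε| * nX2 (usq u) ≤
      (nXstar (usq f)) ^ 2
      + (⨆ (R : ℝ) (_ : 0 < R), (ENNReal.ofReal (R^3))⁻¹ * ∫⁻ x in ball (0 : Ed d) R, usq u x)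
      + nX2 (gradSq u) := by
  have : Nontrivial (Ed d) := by
    have : Nonempty (Fin d) := ⟨⟨0, by omega⟩⟩
    infer_instance
  set N := nXstar (usq f)
  set U := nX2 (usq u) with hU
  set A := ⨆ (R : ℝ) (_ : 0 < R),
    (ENNReal.ofReal (R ^ 3))⁻¹ * ∫⁻ x in ball (0 : Ed d) R, usq u x with hA
  set M := ∫⁻ x, usq u x with hM
  set e := ENNReal.ofReal |ε| with he
  have he0 : e ≠ 0 := by simpa [he] using hε
  have hetop : e ≠ ⊤ := ENNReal.ofReal_ne_top
  have hfc : Continuous f := continuous_rhs hVcont hu heq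
  have hen : e * M ≤ N * U ^ (1 / 2 : ℝ) :=
    (energy_lintegral hVcont hσ hu huL2 hgradL2 hfL2 heq).trans
      (lintegral_mul_le_duality hu.continuous.measurable hfc.measurable)
  refine le_trans ?_ le_self_add
  by_cases hAU : e * U ≤ A
  · exact hAU.trans le_add_self
  -- Otherwise the radii with `|ε| R² ≥ 1` decide, and the total mass controls `U`.
  have hUM : U ≤ ENNReal.ofReal √|ε| * M := by
    refine (le_max_iff.1 (nX2_le_max hε (usq u))).resolve_left fun h => hAU ?_
    calc e * U ≤ e * (e⁻¹ * A) := by gcongr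
      _ = A := by rw [← mul_assoc, ENNReal.mul_inv_cancel he0 hetop, one_mul]
  have hUtop : U ≠ ⊤ := ne_top_of_le_ne_top (ENNReal.mul_ne_top ENNReal.ofReal_ne_top huL2.ne) hUM
  have hU0 : U ≠ 0 := fun h => hAU (by simp [h])
  refine le_trans ?_ le_self_add
  -- `e U ≤ N²` follows after cancelling a factor `U`, which is neither zero nor infinite.
  refine (ENNReal.mul_le_mul_iff_left hU0 hUtop).1 ?_
  have hs : ENNReal.ofReal √|ε| ^ 2 = e := by
    rw [← ENNReal.ofReal_pow (Real.sqrt_nonneg _), Real.sq_sqrt (abs_nonneg _)]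
  have hr : (U ^ (1 / 2 : ℝ)) ^ 2 = U := by
    rw [← ENNReal.rpow_natCast, ← ENNReal.rpow_mul]; norm_num
  calc e * U * U = e * U ^ 2 := by ring
    _ ≤ e * (ENNReal.ofReal √|ε| * M) ^ 2 := by gcongr
    _ = (e * M) ^ 2 := by rw [mul_pow, hs]; ring
    _ ≤ (N * U ^ (1 / 2 : ℝ)) ^ 2 := by gcongr
    _ = N ^ 2 * U := by rw [mul_pow, hr]
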